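/- arXiv:0807.2191 — 3 statements merged into one kernel-verified Lean document; each statement's English description precedes it below -/
import Mathlib

section
/- Let k be an algebraically closed field of characteristic zero, let n ≥ 1, and let G be a finite subgroup of GL(n,k), acting on the polynomial ring R = k[x₁,…,xₙ] by the dual action (g·f)(p) = f(g⁻¹·p) (k-algebra automorphisms given by linear substitution of the variables). Then the invariant subalgebra R^G = { f ∈ R : g·f = f for all g ∈ G } is an integral domain and a finitely generated k-algebra. -/
/-- The dual action of `g ∈ GL(n,k)` on polynomials: `(g · f)(p) = f(g⁻¹ · p)`, i.e. the
`k`-algebra endomorphism substituting `xᵢ ↦ Σⱼ (g⁻¹)ᵢⱼ xⱼ`. -/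
noncomputable def glSubst {k : Type*} [Field k] {n : ℕ}
    (g : Matrix.GeneralLinearGroup (Fin n) k) :
    MvPolynomial (Fin n) k →ₐ[k] MvPolynomial (Fin n) k :=
  MvPolynomial.aeval fun i =>
    ∑ j, MvPolynomial.C ((↑(g⁻¹) : Matrix (Fin n) (Fin n) k) i j) * MvPolynomial.X j

/-- The invariant subalgebra `k[x₁,…,xₙ]^G` of a subgroup `G ⊆ GL(n,k)` acting dually on
polynomials. -/
noncomputable def glInvariants {k : Type*} [Field k] {n : ℕ}
    (G : Subgroup (Matrix.GeneralLinearGroup (Fin n) k)) :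
    Subalgebra k (MvPolynomial (Fin n) k) where
  carrier := {f | ∀ g ∈ G, glSubst g f = f}
  mul_mem' := by
    intro a b ha hb g hg
    rw [map_mul, ha g hg, hb g hg]
  add_mem' := by
    intro a b ha hb g hg
    rw [map_add, ha g hg, hb g hg]
  algebraMap_mem' := by
    intro r g hg
    exact (glSubst g).commutes r

theorem glSubst_one' {k : Type*} [Field k] {n : ℕ} (f : MvPolynomial (Fin n) k) :
    glSubst (1 : Matrix.GeneralLinearGroup (Fin n) k) f = f := by
  have : glSubst (1 : Matrix.GeneralLinearGroup (Fin n) k) = AlgHom.id k _ := by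
    apply MvPolynomial.algHom_ext
    intro i
    simp [glSubst, Matrix.one_apply]
  rw [this]; rfl

theorem glSubst_mul' {k : Type*} [Field k] {n : ℕ}
    (g h : Matrix.GeneralLinearGroup (Fin n) k) (f : MvPolynomial (Fin n) k) :
    glSubst (g * h) f = glSubst g (glSubst h f) := by
  have : glSubst (g * h) = (glSubst g).comp (glSubst h) := by
    apply MvPolynomial.algHom_ext
    intro i
    simp only [glSubst, AlgHom.comp_apply, MvPolynomial.aeval_X, map_sum, map_mul,
      MvPolynomial.algHom_C, mul_inv_rev, Units.val_mul, Matrix.mul_apply, Finset.sum_mul,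
      Finset.mul_sum, MvPolynomial.algebraMap_eq]
    rw [Finset.sum_comm]
    simp only [mul_assoc]
  rw [this]; rfl

/-- The action of `G` on polynomials. -/
noncomputable abbrev glAction {k : Type*} [Field k] {n : ℕ}
    (G : Subgroup (Matrix.GeneralLinearGroup (Fin n) k)) :
    MulSemiringAction G (MvPolynomial (Fin n) k) where
  smul g f := glSubst g.1 f
  one_smul f := glSubst_one' f
  mul_smul g h f := glSubst_mul' g.1 h.1 f
  smul_zero g := map_zero (glSubst g.1)
  smul_add g := map_add (glSubst g.1)
  smul_one g := map_one (glSubst g.1)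
  smul_mul g := map_mul (glSubst g.1)

/-- Let `k` be an algebraically closed field of characteristic zero, `n ≥ 1` and `G` a finite
subgroup of `GL(n,k)` acting dually on `R = k[x₁,…,xₙ]`.  Then the invariant subalgebra `R^G`
is an integral domain and a finitely generated `k`-algebra. -/
theorem statement0 (k : Type*) [Field k] [IsAlgClosed k] [CharZero k] (n : ℕ) (hn : 1 ≤ n)
    (G : Subgroup (Matrix.GeneralLinearGroup (Fin n) k)) [Finite G] :
    IsDomain (glInvariants G) ∧ Algebra.FiniteType k (glInvariants G) := by
  refine ⟨inferInstance, ?_⟩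
  let := glAction G
  have : SMulCommClass G (glInvariants G) (MvPolynomial (Fin n) k) := ⟨fun g a f => by
    change glSubst g.1 (a.1 * f) = a.1 * glSubst g.1 f
    rw [map_mul, a.2 g.1 g.2]⟩
  have : Algebra.IsInvariant (glInvariants G) (MvPolynomial (Fin n) k) G :=
    ⟨fun b hb => ⟨⟨b, fun g hg => hb ⟨g, hg⟩⟩, rfl⟩⟩
  have := Algebra.IsInvariant.isIntegral (glInvariants G) (MvPolynomial (Fin n) k) G
  have : Algebra.FiniteType (glInvariants G) (MvPolynomial (Fin n) k) :=
    Algebra.FiniteType.of_restrictScalars_finiteType k _ _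
  have : Module.Finite (glInvariants G) (MvPolynomial (Fin n) k) :=
    Algebra.IsIntegral.finite
  exact ⟨fg_of_fg_of_fg k (glInvariants G) (MvPolynomial (Fin n) k)
    (Algebra.FiniteType.out) (Module.Finite.fg_top) Subtype.val_injective⟩
end

section
/- Let k be an algebraically closed field of characteristic zero and let G be a finite subgroup of GL(n,k), acting on kⁿ and dually on k[x₁,…,xₙ] by (g·f)(p) = f(g⁻¹·p). For points p, p′ ∈ kⁿ, the following are equivalent: (i) f(p) = f(p′) for every G-invariant polynomial f ∈ k[x₁,…,xₙ]^G; (ii) the orbits G·p and G·p′ coincide. In other words, the G-invariant polynomials separate exactly the G-orbits in kⁿ. -/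
theorem eval_glSubst {k : Type*} [Field k] {n : ℕ}
    (g : Matrix.GeneralLinearGroup (Fin n) k) (f : MvPolynomial (Fin n) k) (x : Fin n → k) :
    MvPolynomial.eval x (glSubst g f) =
      MvPolynomial.eval (Matrix.mulVec (↑(g⁻¹) : Matrix (Fin n) (Fin n) k) x) f := by
  unfold glSubst
  induction f using MvPolynomial.induction_on with
  | C a => simp
  | add a b ha hb => simp only [map_add, ha, hb]
  | mul_X a i ha =>
    simp only [map_mul, ha, MvPolynomial.aeval_X, map_sum, MvPolynomial.eval_C,
      MvPolynomial.eval_X]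
    rfl

theorem glSubst_glSubst {k : Type*} [Field k] [Infinite k] {n : ℕ}
    (g g' : Matrix.GeneralLinearGroup (Fin n) k) (f : MvPolynomial (Fin n) k) :
    glSubst g (glSubst g' f) = glSubst (g * g') f := by
  apply MvPolynomial.funext
  intro x
  rw [eval_glSubst, eval_glSubst, eval_glSubst, Matrix.mulVec_mulVec, mul_inv_rev, Units.val_mul]

theorem exists_sep {k : Type*} [Field k] {n : ℕ} (p : Fin n → k) (S : Finset (Fin n → k))
    (hp : p ∉ S) : ∃ h : MvPolynomial (Fin n) k, MvPolynomial.eval p h = 0 ∧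
      ∀ q ∈ S, MvPolynomial.eval q h ≠ 0 := by
  have H : ∃ h : MvPolynomial (Fin n) k, MvPolynomial.eval p h ≠ 0 ∧
      ∀ q ∈ S, MvPolynomial.eval q h = 0 := by
    have H1 : ∀ q : Fin n → k, ∃ u : MvPolynomial (Fin n) k, MvPolynomial.eval q u = 0 ∧
        (q ∈ S → MvPolynomial.eval p u ≠ 0) := by
      intro q
      by_cases hq : q ∈ S
      · have hne : p ≠ q := fun h => hp (h ▸ hq)
        obtain ⟨i, hi⟩ := Function.ne_iff.mp hne
        exact ⟨MvPolynomial.X i - MvPolynomial.C (q i), by simp,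
          fun _ => by simpa [sub_eq_zero] using hi⟩
      · exact ⟨0, by simp, fun h => absurd h hq⟩
    choose u hu hu' using H1
    refine ⟨∏ q ∈ S, u q, ?_, ?_⟩
    · rw [map_prod]
      exact Finset.prod_ne_zero_iff.mpr fun q hq => hu' q hq
    · intro q hq
      rw [map_prod]
      exact Finset.prod_eq_zero hq (hu q)
  obtain ⟨h, h1, h2⟩ := H
  refine ⟨h - MvPolynomial.C (MvPolynomial.eval p h), by simp, fun q hq => ?_⟩
  simpa [h2 q hq] using h1


/-- Invariant polynomials of a finite subgroup `G ⊆ GL(n,k)` separate exactly the `G`-orbits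
in `kⁿ`: for `p, p′ ∈ kⁿ`, every `G`-invariant polynomial takes the same value at `p` and `p′`
if and only if the orbits `G·p` and `G·p′` coincide.  Here `k` is algebraically closed of
characteristic zero. -/
theorem statement3 (k : Type*) [Field k] [IsAlgClosed k] [CharZero k] (n : ℕ)
    (G : Subgroup (Matrix.GeneralLinearGroup (Fin n) k)) [Finite G] (p p' : Fin n → k) :
    (∀ f : MvPolynomial (Fin n) k, (∀ g ∈ G, glSubst g f = f) →
        MvPolynomial.eval p f = MvPolynomial.eval p' f) ↔
      (fun g : Matrix.GeneralLinearGroup (Fin n) k =>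
          Matrix.mulVec (↑g : Matrix (Fin n) (Fin n) k) p) '' (G : Set _) =
        (fun g : Matrix.GeneralLinearGroup (Fin n) k =>
          Matrix.mulVec (↑g : Matrix (Fin n) (Fin n) k) p') '' (G : Set _) := by

  have key : (∃ g ∈ G, Matrix.mulVec (↑g : Matrix (Fin n) (Fin n) k) p' = p) ↔
      (fun g : Matrix.GeneralLinearGroup (Fin n) k =>
          Matrix.mulVec (↑g : Matrix (Fin n) (Fin n) k) p) '' (G : Set _) =
        (fun g : Matrix.GeneralLinearGroup (Fin n) k =>
          Matrix.mulVec (↑g : Matrix (Fin n) (Fin n) k) p') '' (G : Set _) := by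
    constructor
    · rintro ⟨g, hg, rfl⟩
      ext x
      constructor
      · rintro ⟨a, ha, rfl⟩
        exact ⟨a * g, G.mul_mem ha hg, by simp [Matrix.mulVec_mulVec]⟩
      · rintro ⟨a, ha, rfl⟩
        refine ⟨a * g⁻¹, G.mul_mem ha (G.inv_mem hg), ?_⟩
        change Matrix.mulVec _ (Matrix.mulVec _ _) = _
        rw [Matrix.mulVec_mulVec, ← Units.val_mul, inv_mul_cancel_right]
    · intro h
      have h1 : p ∈ (fun g : Matrix.GeneralLinearGroup (Fin n) k =>
          Matrix.mulVec (↑g : Matrix (Fin n) (Fin n) k) p) '' (G : Set _) :=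
        ⟨1, G.one_mem, by simp⟩
      rw [h] at h1
      exact h1
  rw [← key]
  constructor
  · intro H
    by_contra hcon
    cases nonempty_fintype G
    classical
    obtain ⟨h, h1, h2⟩ := exists_sep p (Finset.univ.image fun g : G =>
      Matrix.mulVec (↑(g : Matrix.GeneralLinearGroup (Fin n) k) : Matrix (Fin n) (Fin n) k) p')
      (by
        intro hm
        obtain ⟨g, -, hg⟩ := Finset.mem_image.mp hm
        exact hcon ⟨g, g.2, hg⟩)
    have hF := H (∏ g : G, glSubst (g : Matrix.GeneralLinearGroup (Fin n) k) h) (by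
      intro a ha
      rw [map_prod]
      simp only [glSubst_glSubst]
      exact Fintype.prod_equiv (Equiv.mulLeft (⟨a, ha⟩ : G)) _ _ fun _ => rfl)
    rw [map_prod, map_prod, Finset.prod_eq_zero (Finset.mem_univ (1 : G))
      (by rw [eval_glSubst]; simpa using h1)] at hF
    refine Finset.prod_ne_zero_iff.mpr (fun g _ => ?_) hF.symm
    rw [eval_glSubst]
    exact h2 _ (Finset.mem_image.mpr ⟨g⁻¹, Finset.mem_univ _, rfl⟩)
  · rintro ⟨g, hg, rfl⟩ f hf
    conv_rhs => rw [← hf g⁻¹ (G.inv_mem hg), eval_glSubst, inv_inv]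
end

section
/- Let k be a field and S a finitely generated submonoid of ℤ^d that generates ℤ^d as a group. Then the monoid algebra k[S] is an integrally closed domain (normal) if and only if S is saturated, i.e. for every u ∈ ℤ^d, if m·u ∈ S for some integer m ≥ 1 then u ∈ S. Equivalently, k[S] is normal if and only if S equals the set Cone(S) ∩ ℤ^d of lattice points of the rational polyhedral cone generated by S in ℚ^d. -/
open AddMonoidAlgebra in
/-- Elements of the group algebra whose support lies in `T`. -/
def suppIn8 (k : Type*) [Field k] {G : Type*} [AddCommGroup G] (T : Set G) :
    Submodule k (AddMonoidAlgebra k G) where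
  carrier := {f | ∀ a, a ∉ T → f.coeff a = 0}
  add_mem' := by
    intro f g hf hg a ha
    simp [hf a ha, hg a ha]
  zero_mem' := by
    intro a _
    simp
  smul_mem' := by
    intro c f hf a ha
    simp [hf a ha]

theorem mem_suppIn8 {k : Type*} [Field k] {G : Type*} [AddCommGroup G] {T : Set G}
    {f : AddMonoidAlgebra k G} : f ∈ suppIn8 k T ↔ ∀ a, a ∉ T → f.coeff a = 0 := Iff.rfl

theorem suppIn8_mul {k : Type*} [Field k] {G : Type*} [AddCommGroup G] {A B C : Set G}
    (h : ∀ a ∈ A, ∀ b ∈ B, a + b ∈ C)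
    {f g : AddMonoidAlgebra k G} (hf : f ∈ suppIn8 k A) (hg : g ∈ suppIn8 k B) :
    f * g ∈ suppIn8 k C := by
  classical
  intro c hc
  by_contra hne
  have hm := AddMonoidAlgebra.support_coeff_mul_subset f g (Finsupp.mem_support_iff.2 hne)
  obtain ⟨a, ha, b, hb, rfl⟩ := Finset.mem_add.1 hm
  refine hc (h a ?_ b ?_)
  · by_contra hA
    exact Finsupp.mem_support_iff.1 ha (hf a hA)
  · by_contra hB
    exact Finsupp.mem_support_iff.1 hb (hg b hB)

theorem suppIn8_single {k : Type*} [Field k] {G : Type*} [AddCommGroup G] {A : Set G}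
    {a : G} (ha : a ∈ A) (r : k) : AddMonoidAlgebra.single a r ∈ suppIn8 k A := by
  classical
  intro b hb
  rw [AddMonoidAlgebra.coeff_single_apply, if_neg]
  rintro rfl
  exact hb ha

theorem suppIn8_pow {k : Type*} [Field k] {G : Type*} [AddCommGroup G] (P : AddSubmonoid G)
    {f : AddMonoidAlgebra k G} (hf : f ∈ suppIn8 k (P : Set G)) (n : ℕ) :
    f ^ n ∈ suppIn8 k (P : Set G) := by
  induction n with
  | zero =>
    rw [pow_zero, AddMonoidAlgebra.one_def]
    exact suppIn8_single P.zero_mem _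
  | succ n ih =>
    rw [pow_succ]
    exact suppIn8_mul (fun a ha b hb => P.add_mem ha hb) ih hf

/-- A saturated submonoid avoiding `u` extends to a total one avoiding `u`. -/
theorem exists_total8 {G : Type*} [AddCommGroup G] (S : AddSubmonoid G)
    (hS : ∀ x : G, (∃ m : ℕ, 1 ≤ m ∧ m • x ∈ S) → x ∈ S) (u : G) (hu : u ∉ S) :
    ∃ P : AddSubmonoid G, S ≤ P ∧ u ∉ P ∧ ∀ a, a ∈ P ∨ -a ∈ P := by
  obtain ⟨P, hSP, hP⟩ := zorn_le_nonempty₀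
    {P : AddSubmonoid G | (∀ x : G, (∃ m : ℕ, 1 ≤ m ∧ m • x ∈ P) → x ∈ P) ∧ u ∉ P}
    (by
      intro c hc hchain y hy
      have hdir : DirectedOn (· ≤ ·) c := hchain.directedOn
      refine ⟨sSup c, ⟨?_, ?_⟩, fun z hz => le_sSup hz⟩
      · rintro x ⟨m, hm, hx⟩
        rw [AddSubmonoid.mem_sSup_of_directedOn ⟨y, hy⟩ hdir] at hx ⊢
        obtain ⟨Q, hQ, hx⟩ := hx
        exact ⟨Q, hQ, (hc hQ).1 x ⟨m, hm, hx⟩⟩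
      · intro hx
        rw [AddSubmonoid.mem_sSup_of_directedOn ⟨y, hy⟩ hdir] at hx
        obtain ⟨Q, hQ, hx⟩ := hx
        exact (hc hQ).2 hx) S ⟨hS, hu⟩
  refine ⟨P, hSP, hP.prop.2, ?_⟩
  obtain ⟨⟨hsat, huP⟩, hmax⟩ := hP
  have key : ∀ a, a ∉ P → ∃ m : ℕ, 1 ≤ m ∧ ∃ i : ℕ, m • u - i • a ∈ P := by
    intro a ha
    by_contra hcon
    let Q : AddSubmonoid G :=
      { carrier := {x | ∃ m : ℕ, 1 ≤ m ∧ ∃ i : ℕ, m • x - i • a ∈ P}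
        zero_mem' := ⟨1, le_rfl, 0, by simp⟩
        add_mem' := by
          rintro x y ⟨m, hm, i, hx⟩ ⟨n, hn, j, hy⟩
          refine ⟨m * n, Nat.mul_pos hm hn, n * i + m * j, ?_⟩
          have := P.add_mem (P.nsmul_mem hx n) (P.nsmul_mem hy m)
          convert this using 1
          module }
    have hQ : Q ≤ P := by
      refine hmax ⟨?_, hcon⟩ ?_
      · rintro x ⟨m, hm, n, hn, i, hx⟩
        refine ⟨n * m, Nat.mul_pos hn hm, i, ?_⟩
        rwa [mul_nsmul']
      · intro x hx
        exact ⟨1, le_rfl, 0, by simpa using hx⟩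
    exact ha (hQ ⟨1, le_rfl, 1, by simp⟩)
  intro a
  by_contra hcon
  push Not at hcon
  obtain ⟨m, hm, i, hi⟩ := key a hcon.1
  obtain ⟨n, hn, j, hj⟩ := key (-a) hcon.2
  rcases Nat.eq_zero_or_pos i with rfl | hipos
  · exact huP (hsat u ⟨m, hm, by simpa using hi⟩)
  · refine huP (hsat u ⟨j * m + i * n, ?_, ?_⟩)
    · have := Nat.mul_pos hipos hn
      omega
    · have := P.add_mem (P.nsmul_mem hi j) (P.nsmul_mem hj i)
      convert this using 1
      module

theorem exists_min8 {G : Type*} [AddCommGroup G] (P : AddSubmonoid G)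
    (hP : ∀ a, a ∈ P ∨ -a ∈ P) (s : Finset G) (hs : s.Nonempty) :
    ∃ e ∈ s, ∀ a ∈ s, a - e ∈ P := by
  induction hs using Finset.Nonempty.cons_induction with
  | singleton a => exact ⟨a, by simp, by simp⟩
  | cons b s hb hs ih =>
    obtain ⟨e, he, h⟩ := ih
    rcases hP (b - e) with h1 | h1
    · refine ⟨e, by simp [he], ?_⟩
      intro a ha
      rcases Finset.mem_cons.1 ha with rfl | ha
      · exact h1
      · exact h a ha
    · refine ⟨b, by simp, ?_⟩
      intro a ha
      rcases Finset.mem_cons.1 ha with rfl | ha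
      · simp
      · have := P.add_mem (h a ha) h1
        convert this using 1
        abel

/-- An element of the group algebra integral over `k[S]`, with `S` saturated, is supported in `S`. -/
theorem integral_supp8 {k : Type*} [Field k] {G : Type*} [AddCommGroup G]
    [IsDomain (AddMonoidAlgebra k G)] (S : AddSubmonoid G)
    (hS : ∀ x : G, (∃ m : ℕ, 1 ≤ m ∧ m • x ∈ S) → x ∈ S)
    {R : Type*} [CommRing R] (φ : R →+* AddMonoidAlgebra k G)
    (hφ : ∀ r, φ r ∈ suppIn8 k (S : Set G)) (f : AddMonoidAlgebra k G)
    (hf : φ.IsIntegralElem f) : f ∈ suppIn8 k (S : Set G) := by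
  classical
  intro u hu
  by_contra hfu
  obtain ⟨P, hSP, huP, htot⟩ := exists_total8 S hS u hu
  have hus : u ∈ f.coeff.support := Finsupp.mem_support_iff.2 hfu
  obtain ⟨e, hes, he⟩ := exists_min8 P htot f.coeff.support ⟨u, hus⟩
  have heP : e ∉ P := fun h => huP (by simpa using P.add_mem (he u hus) h)
  have hneP : -e ∈ P := (htot e).resolve_left heP
  let Pp : Set G := {a | a ∈ P ∧ -a ∉ P}
  let P0 : AddSubmonoid G :=
    { carrier := {a | a ∈ P ∧ -a ∈ P}
      zero_mem' := by simp
      add_mem' := by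
        rintro a b ⟨ha, ha'⟩ ⟨hb, hb'⟩
        refine ⟨P.add_mem ha hb, ?_⟩
        rw [neg_add]
        exact P.add_mem ha' hb' }
  have hPpP : ∀ a ∈ Pp, ∀ b ∈ (P : Set G), a + b ∈ Pp := by
    rintro a ⟨ha, ha'⟩ b hb
    refine ⟨P.add_mem ha hb, fun h => ha' ?_⟩
    have := P.add_mem h hb
    simpa using this
  have hPPp : ∀ a ∈ (P : Set G), ∀ b ∈ Pp, a + b ∈ Pp := by
    intro a ha b hb
    rw [add_comm]
    exact hPpP b hb a ha
  set t : AddMonoidAlgebra k G := AddMonoidAlgebra.single (-e) 1 with ht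
  have htp : t ∈ suppIn8 k Pp := 
    suppIn8_single (show -e ∈ Pp from ⟨hneP, by simpa using heP⟩) 1
  have htP : t ∈ suppIn8 k (P : Set G) := suppIn8_single hneP 1
  set g := t * f with hg
  have hgc : ∀ a, g.coeff a = f.coeff (e + a) := by
    intro a
    rw [hg, ht]
    rw [AddMonoidAlgebra.coeff_single_mul_eq_mul_coeff (e + a)]
    · simp
    · intro b _
      constructor
      · rintro rfl
        abel
      · rintro rfl
        abel
  have hgP : g ∈ suppIn8 k (P : Set G) := by
    intro a ha
    rw [hgc]
    by_contra hne
    have := he _ (Finsupp.mem_support_iff.2 hne)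
    simp at this
    exact ha this
  -- the part of `g` in degree zero
  let g0 : AddMonoidAlgebra k G :=
    AddMonoidAlgebra.ofCoeff (g.coeff.filter (fun a => a ∈ P0))
  have hg0 : g0 ∈ suppIn8 k (P0 : Set G) := by
    intro a ha
    exact Finsupp.filter_apply_neg _ _ ha
  have hg0ne : g0 ≠ 0 := by
    intro h
    have h1 : g0.coeff 0 = g.coeff 0 := Finsupp.filter_apply_pos _ _ P0.zero_mem
    rw [h, hgc, add_zero] at h1
    exact Finsupp.mem_support_iff.1 hes h1.symm
  have hg0P : g0 ∈ suppIn8 k (P : Set G) := fun a ha => hg0 a fun h => ha h.1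
  have hdiff : g - g0 ∈ suppIn8 k Pp := by
    intro a ha
    have hs : (g - g0).coeff a = g.coeff a - g0.coeff a := by simp
    rw [hs]
    by_cases haP : a ∈ P
    · have hna : -a ∈ P := by
        by_contra h
        exact ha ⟨haP, h⟩
      have h1 : g0.coeff a = g.coeff a :=
        Finsupp.filter_apply_pos (fun a => a ∈ P0) g.coeff (show a ∈ P0 from ⟨haP, hna⟩)
      rw [h1, sub_self]
    · rw [hgP a haP, hg0P a haP, sub_self]
  have hpow : ∀ n : ℕ, g ^ n - g0 ^ n ∈ suppIn8 k Pp := by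
    intro n
    induction n with
    | zero => simp
    | succ n ih =>
      have : g ^ (n + 1) - g0 ^ (n + 1) = (g ^ n - g0 ^ n) * g + g0 ^ n * (g - g0) := by ring
      rw [this]
      exact add_mem (suppIn8_mul hPpP ih hgP) (suppIn8_mul hPPp (suppIn8_pow P hg0P n) hdiff)
  obtain ⟨p, hmon, hp⟩ := hf
  have hgn : g ^ p.natDegree ∈ suppIn8 k Pp := by
    rw [Polynomial.eval₂_eq_sum_range, Finset.sum_range_succ, hmon.coeff_natDegree, map_one,
      one_mul] at hp
    have h1 : g ^ p.natDegree = -∑ i ∈ Finset.range p.natDegree,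
        t ^ p.natDegree * (φ (p.coeff i) * f ^ i) := by
      rw [← Finset.mul_sum, hg, mul_pow, eq_neg_of_add_eq_zero_right hp]
      ring
    rw [h1]
    refine neg_mem (Submodule.sum_mem _ fun i hi => ?_)
    have hi' := Finset.mem_range.1 hi
    obtain ⟨j, hj⟩ : ∃ j, p.natDegree = i + j + 1 := ⟨p.natDegree - i - 1, by omega⟩
    have h2 : t ^ p.natDegree * (φ (p.coeff i) * f ^ i) = t * (t ^ j * (φ (p.coeff i) * g ^ i)) := by
      rw [hj, hg]
      ring
    rw [h2]
    have hadd : ∀ a ∈ (P : Set G), ∀ b ∈ (P : Set G), a + b ∈ (P : Set G) :=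
      fun a ha b hb => P.add_mem ha hb
    exact suppIn8_mul hPpP htp (suppIn8_mul hadd (suppIn8_pow P htP j)
      (suppIn8_mul hadd (fun a ha => hφ _ a fun h => ha (hSP h)) (suppIn8_pow P hgP i)))
  have h3 : g0 ^ p.natDegree ∈ suppIn8 k Pp := by
    have := sub_mem hgn (hpow p.natDegree)
    simpa using this
  have h4 := suppIn8_pow P0 hg0 p.natDegree
  refine pow_ne_zero p.natDegree hg0ne ?_
  ext a
  by_cases ha : a ∈ Pp
  · exact h4 a fun h => ha.2 h.2
  · exact h3 a ha

/-- The Laurent polynomial ring in `d` variables is integrally closed. -/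
theorem laurent_closed8 (k : Type*) [Field k] (d : ℕ) :
    IsIntegrallyClosed (AddMonoidAlgebra k (Fin d → ℤ)) := by
  classical
  let ι : (Fin d →₀ ℕ) →+ (Fin d → ℤ) :=
    { toFun := fun a i => (a i : ℤ)
      map_zero' := by ext; simp
      map_add' := by intro a b; ext; simp }
  have hι : Function.Injective ι := by
    intro a b h
    ext i
    have : (a i : ℤ) = (b i : ℤ) := congrFun h i
    exact_mod_cast this
  let φ : MvPolynomial (Fin d) k →+* AddMonoidAlgebra k (Fin d → ℤ) :=
    AddMonoidAlgebra.mapDomainRingHom k ι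
  have hφi : Function.Injective φ := AddMonoidAlgebra.mapDomain_injective hι
  have hφm : ∀ a (r : k), φ (MvPolynomial.monomial a r) = AddMonoidAlgebra.single (ι a) r :=
    fun a r => AddMonoidAlgebra.mapDomain_single
  letI := φ.toAlgebra
  let M : Submonoid (MvPolynomial (Fin d) k) :=
    { carrier := {x | ∃ a, x = MvPolynomial.monomial a 1}
      one_mem' := ⟨0, rfl⟩
      mul_mem' := by
        rintro _ _ ⟨a, rfl⟩ ⟨b, rfl⟩
        exact ⟨a + b, by simp [MvPolynomial.monomial_mul]⟩ }
  have hM : M ≤ nonZeroDivisors (MvPolynomial (Fin d) k) := by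
    rintro _ ⟨a, rfl⟩
    rw [mem_nonZeroDivisors_iff_ne_zero]
    simp
  have hloc : IsLocalization M (AddMonoidAlgebra k (Fin d → ℤ)) :=
    { map_units := by
        rintro ⟨_, a, rfl⟩
        refine IsUnit.of_mul_eq_one (AddMonoidAlgebra.single (-(ι a)) 1) ?_
        change φ _ * _ = 1
        rw [hφm, AddMonoidAlgebra.single_mul_single, AddMonoidAlgebra.one_def]
        simp
      surj := by
        intro z
        have key : ∃ (x : MvPolynomial (Fin d) k) (a : Fin d →₀ ℕ),
            z * φ (MvPolynomial.monomial a 1) = φ x := by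
          induction z using AddMonoidAlgebra.induction_linear with
          | zero => exact ⟨0, 0, by simp⟩
          | add f g hf hg =>
            obtain ⟨x, a, hx⟩ := hf
            obtain ⟨y, b, hy⟩ := hg
            refine ⟨x * MvPolynomial.monomial b 1 + y * MvPolynomial.monomial a 1, a + b, ?_⟩
            have : (MvPolynomial.monomial (a + b) 1 : MvPolynomial (Fin d) k)
              = MvPolynomial.monomial a 1 * MvPolynomial.monomial b 1 := by
              simp [MvPolynomial.monomial_mul]
            rw [this, map_mul, map_add, map_mul, map_mul, ← hx, ← hy]
            ring
          | single v r =>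
            refine ⟨MvPolynomial.monomial (Finsupp.equivFunOnFinite.symm
              fun i => (v i).toNat) r, Finsupp.equivFunOnFinite.symm fun i => (-v i).toNat, ?_⟩
            rw [hφm, hφm, AddMonoidAlgebra.single_mul_single, mul_one]
            congr 1
            ext i
            simp [ι]
            omega
        obtain ⟨x, a, h⟩ := key
        exact ⟨⟨x, ⟨_, a, rfl⟩⟩, h⟩
      exists_of_eq := by
        intro x y h
        exact ⟨1, by rw [hφi h]⟩ }
  exact isIntegrallyClosed_of_isLocalization (R := MvPolynomial (Fin d) k) _ M hM

/-- Let `S` be a finitely generated submonoid of `ℤ^d` generating `ℤ^d` as a group.  The monoid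
algebra `k[S]` is an integrally closed (normal) domain if and only if `S` is saturated, i.e.
whenever `m • u ∈ S` for some `m ≥ 1` and `u ∈ ℤ^d`, already `u ∈ S`.  (Since `S` is finitely
generated, the saturation condition describes exactly the lattice points `Cone(S) ∩ ℤ^d` of the
rational polyhedral cone generated by `S`.) -/
theorem statement8 (k : Type*) [Field k] (d : ℕ) (S : AddSubmonoid (Fin d → ℤ))
    (hfg : S.FG) (hgen : AddSubgroup.closure (S : Set (Fin d → ℤ)) = ⊤) :
    (IsDomain (AddMonoidAlgebra k S) ∧ IsIntegrallyClosed (AddMonoidAlgebra k S)) ↔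
      ∀ u : Fin d → ℤ, (∃ m : ℕ, 1 ≤ m ∧ m • u ∈ S) → u ∈ S := by
  classical
  constructor
  · rintro ⟨hdom, hcl⟩ u ⟨m, hm, hmu⟩
    have hu : ∀ v ∈ AddSubgroup.closure (S : Set (Fin d → ℤ)),
        ∃ a b : S, v = (a : Fin d → ℤ) - b := by
      intro v hv
      induction hv using AddSubgroup.closure_induction with
      | mem x hx => exact ⟨⟨x, hx⟩, 0, by simp⟩
      | zero => exact ⟨0, 0, by simp⟩
      | add x y _ _ hx hy =>
        obtain ⟨a, b, rfl⟩ := hx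
        obtain ⟨a', b', rfl⟩ := hy
        refine ⟨a + a', b + b', ?_⟩
        push_cast
        abel
      | neg x _ hx =>
        obtain ⟨a, b, rfl⟩ := hx
        exact ⟨b, a, by abel⟩
    replace hu := hu u (by rw [hgen]; trivial)
    obtain ⟨a, b, rfl⟩ := hu
    have hdvd : (AddMonoidAlgebra.single b (1 : k)) ^ m ∣ (AddMonoidAlgebra.single a (1 : k)) ^ m := by
      refine ⟨AddMonoidAlgebra.single ⟨_, hmu⟩ 1, ?_⟩
      rw [AddMonoidAlgebra.single_pow, AddMonoidAlgebra.single_pow,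
        AddMonoidAlgebra.single_mul_single]
      simp only [one_pow, mul_one]
      congr 1
      ext1
      simp [smul_sub]
    rw [IsIntegrallyClosed.pow_dvd_pow_iff (by omega)] at hdvd
    obtain ⟨r, hr⟩ := hdvd
    by_contra hcon
    have h1 := congrArg (fun x => x.coeff a) hr
    simp only [AddMonoidAlgebra.coeff_single, Finsupp.single_eq_same] at h1
    rw [AddMonoidAlgebra.coeff_single_mul_of_forall_add_ne] at h1
    · exact one_ne_zero h1
    · intro s hs
      apply hcon
      rw [← hs]
      simp
  · intro hS
    haveI : IsIntegrallyClosed (AddMonoidAlgebra k (Fin d → ℤ)) := laurent_closed8 k d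
    let φ : AddMonoidAlgebra k S →+* AddMonoidAlgebra k (Fin d → ℤ) :=
      AddMonoidAlgebra.mapDomainRingHom k S.subtype
    have hφi : Function.Injective φ :=
      AddMonoidAlgebra.mapDomain_injective Subtype.val_injective
    have hdom : IsDomain (AddMonoidAlgebra k S) := hφi.isDomain φ
    refine ⟨hdom, ?_⟩
    letI := φ.toAlgebra
    haveI : FaithfulSMul (AddMonoidAlgebra k S) (AddMonoidAlgebra k (Fin d → ℤ)) :=
      (faithfulSMul_iff_algebraMap_injective _ _).2 hφi
    have hφ : ∀ r, φ r ∈ suppIn8 k (S : Set (Fin d → ℤ)) := by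
      intro r
      induction r using AddMonoidAlgebra.induction_linear with
      | zero => simp
      | add f g hf hg => rw [map_add]; exact add_mem hf hg
      | single s c =>
        have : φ (AddMonoidAlgebra.single s c) = AddMonoidAlgebra.single (s : Fin d → ℤ) c :=
          AddMonoidAlgebra.mapDomain_single
        rw [this]
        exact suppIn8_single s.2 c
    haveI : IsIntegrallyClosedIn (AddMonoidAlgebra k S) (AddMonoidAlgebra k (Fin d → ℤ)) := by
      rw [isIntegrallyClosedIn_iff]
      refine ⟨hφi, fun {f} hf => ?_⟩
      have hs := integral_supp8 S hS φ hφ f hf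
      refine ⟨AddMonoidAlgebra.comapDomain (Subtype.val : S → _) Subtype.val_injective f, ?_⟩
      refine AddMonoidAlgebra.mapDomain_comapDomain ?_ _
      intro a ha
      by_contra hna
      refine Finsupp.mem_support_iff.1 ha (hs a fun h => hna ⟨⟨a, h⟩, rfl⟩)
    exact IsIntegrallyClosed.of_isIntegrallyClosed_of_isIntegrallyClosedIn
      (AddMonoidAlgebra k S) (AddMonoidAlgebra k (Fin d → ℤ))
end
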